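/- If G ∈ F₄(F₂, dart), then |V(G)| ≤ 7. Here the dart is the graph on vertex set {1,2,3,4,5} with edge set {12, 23, 24, 25, 34, 45}. -/

import Mathlib

/-!
If a matrix `A` of rank at most `k` has an invertible `k × k` submatrix, then it is determined by
the `k` rows and the `k` columns through that submatrix. Over `F₂`, a rank-three graph matrix of the
dart has diagonal entries `1` and `0` at the vertices `0` and `2`, and its principal submatrix on
`{0, 2, 3}` is invertible whatever the entry `b` at the vertex `3` is. So, for a dart inside `G`,
`mr(F₂, G) ≤ 3` means that for some `b` the entries reconstructed from the columns `0, 2, 3` of the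
dart agree with the adjacency of every pair of distinct vertices.

Suppose `G` has at least eight vertices. For any vertices `u, w`, deleting a vertex outside
`dart ∪ {u, w}` yields a `b` for which there is agreement on `dart ∪ {u, w}`. As `b` takes only two
values, some `b` works on `dart ∪ {u}` for every `u`. It also works at every pair `x, y` outside the
dart: the value `c` found for `{x, y}` either equals `b`, or comparing `b` with `c` at the pair of
`x` and vertex `1` of the dart shows that `x` is not adjacent to vertex `2`, in which case the
entry reconstructed at `(x, y)` does not depend on `b`. Hence `mr(F₂, G) ≤ 3`.
-/

open Matrix

/-- `A` is a symmetric matrix over `F` whose off-diagonal nonzero pattern is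
given by the graph `G` (diagonal entries are unconstrained). -/
def IsGraphMatrix (F : Type*) [Field F] {V : Type*} (G : SimpleGraph V)
    (A : Matrix V V F) : Prop :=
  A.IsSymm ∧ ∀ i j : V, i ≠ j → (A i j ≠ 0 ↔ G.Adj i j)

/-- The minimum rank `mr(F, G)` of the graph `G` over the field `F`. -/
noncomputable def minRank (F : Type*) [Field F] {V : Type*} [Fintype V]
    (G : SimpleGraph V) : ℕ :=
  sInf {r : ℕ | ∃ A : Matrix V V F, IsGraphMatrix F G A ∧ A.rank = r}

/-- The graph `G - v` obtained from `G` by deleting the vertex `v`. -/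
def deleteVert {V : Type*} (G : SimpleGraph V) (v : V) : SimpleGraph {u : V // u ≠ v} :=
  SimpleGraph.comap Subtype.val G

/-- `G ∈ F_K(F, H)`: `G` contains `H` as an induced subgraph, `mr(F, G) ≥ K`, and for
some induced copy of `H` in `G` (an embedding `f : H ↪g G`), `mr(F, G - v) ≤ K - 1`
for every vertex `v` of `G` outside that copy. -/
def MemForbRel (F : Type*) [Field F] (K : ℕ) {VH VG : Type*} [Fintype VH] [Fintype VG]
    [DecidableEq VG] (H : SimpleGraph VH) (G : SimpleGraph VG) : Prop :=
  K ≤ minRank F G ∧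
    ∃ f : H ↪g G, ∀ v : VG, v ∉ Set.range f → minRank F (deleteVert G v) + 1 ≤ K

/-- The dart: the graph on `{0, 1, 2, 3, 4}` with edges `01, 12, 13, 14, 23, 34`
(edges `12, 23, 24, 25, 34, 45` on `{1, …, 5}` in 1-indexed notation). -/
def dart : SimpleGraph (Fin 5) :=
  SimpleGraph.fromEdgeSet {s(0,1), s(1,2), s(1,3), s(1,4), s(2,3), s(3,4)}

section Skeleton

variable {m n ι R : Type*} [Fintype ι] [DecidableEq ι] [CommRing R]

/-- The skeleton (or cross) approximation of `A` built from its rows `r` and columns `c`. It uses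
the junk value `0` of `⁻¹` when the submatrix at which these meet is singular. -/
noncomputable def skeleton (A : Matrix m n R) (r : ι → m) (c : ι → n) : Matrix m n R :=
  A.submatrix id c * (A.submatrix r c)⁻¹ * A.submatrix r id

lemma skeleton_submatrix {m' n' : Type*} (A : Matrix m n R) (g : m' → m) (h : n' → n)
    (r : ι → m') (c : ι → n') :
    skeleton (A.submatrix g h) r c = (skeleton A (g ∘ r) (h ∘ c)).submatrix g h :=
  rfl

lemma isSymm_skeleton {A : Matrix m m R} (hA : A.IsSymm) (s : ι → m) :
    (skeleton A s s).IsSymm := by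
  simp only [Matrix.IsSymm, skeleton, transpose_mul, transpose_nonsing_inv, transpose_submatrix,
    hA.eq, Matrix.mul_assoc]

lemma rank_skeleton_le [Nontrivial R] [Fintype n] (A : Matrix m n R) (r : ι → m) (c : ι → n) :
    (skeleton A r c).rank ≤ Fintype.card ι := by
  rw [skeleton, Matrix.mul_assoc]
  exact (rank_mul_le_left _ _).trans (rank_le_card_width _)

lemma det_submatrix_eq_zero_of_rank_lt [IsDomain R] [Fintype n] {A : Matrix m n R}
    (hA : A.rank < Fintype.card ι) (r : ι → m) (c : ι → n) : (A.submatrix r c).det = 0 := by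
  contrapose! hA
  rw [← rank_of_det_ne_zero hA]
  exact A.rank_submatrix_le r c

lemma skeleton_eq_self_of_rank_le [IsDomain R] [Fintype n] {A : Matrix m n R}
    (hA : A.rank ≤ Fintype.card ι) {r : ι → m} {c : ι → n} (hdet : IsUnit (A.submatrix r c).det) :
    skeleton A r c = A := by
  ext x y
  let := invertibleOfIsUnitDet (A.submatrix r c) hdet
  have hborder : A.submatrix (Sum.elim r fun _ : Unit => x) (Sum.elim c fun _ : Unit => y) =
      fromBlocks (A.submatrix r c) (A.submatrix r fun _ => y) (A.submatrix (fun _ => x) c)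
        (A.submatrix (fun _ => x) fun _ => y) := by
    ext (i | i) (j | j) <;> rfl
  have hminor := det_submatrix_eq_zero_of_rank_lt (A := A) (ι := ι ⊕ Unit)
    (by simpa using Nat.lt_succ_of_le hA) (Sum.elim r fun _ => x) (Sum.elim c fun _ => y)
  rw [hborder, det_fromBlocks₁₁, mul_eq_zero, or_iff_right hdet.ne_zero, det_unique,
    invOf_eq_nonsing_inv, Matrix.sub_apply, sub_eq_zero] at hminor
  exact hminor.symm

end Skeleton

section GraphMatrix

variable {F V W : Type*} [Field F] {G : SimpleGraph V} {H : SimpleGraph W}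

variable (F G) in
lemma isGraphMatrix_adjMatrix [DecidableRel G.Adj] : IsGraphMatrix F G (G.adjMatrix F) :=
  ⟨SimpleGraph.isSymm_adjMatrix G, fun _ _ _ => by simp [SimpleGraph.adjMatrix_apply]⟩

lemma IsGraphMatrix.submatrix {A : Matrix V V F} (hA : IsGraphMatrix F G A) (f : H ↪g G) :
    IsGraphMatrix F H (A.submatrix f f) :=
  ⟨hA.1.submatrix f, fun _ _ hij => (hA.2 _ _ (f.injective.ne hij)).trans f.map_adj_iff⟩

lemma isGraphMatrix_zmod_two_iff [DecidableRel G.Adj] {A : Matrix V V (ZMod 2)} :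
    IsGraphMatrix (ZMod 2) G A ↔
      A.IsSymm ∧ ∀ i j, i ≠ j → A i j = G.adjMatrix (ZMod 2) i j := by
  have key (a : ZMod 2) (p : Prop) [Decidable p] : (a ≠ 0 ↔ p) ↔ a = if p then 1 else 0 := by
    by_cases hp : p <;> simp only [hp] <;> decide +revert
  simp only [IsGraphMatrix, key, SimpleGraph.adjMatrix_apply]

lemma IsGraphMatrix.eq_adjMatrix_add_diagonal [DecidableEq V] [DecidableRel G.Adj]
    {A : Matrix V V (ZMod 2)} (hA : IsGraphMatrix (ZMod 2) G A) :
    A = G.adjMatrix (ZMod 2) + diagonal A.diag := by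
  ext i j
  rcases eq_or_ne i j with rfl | hij
  · simp
  · simp [(isGraphMatrix_zmod_two_iff.1 hA).2 i j hij, diagonal_apply_ne _ hij]

lemma minRank_le_iff [Fintype V] {k : ℕ} :
    minRank F G ≤ k ↔ ∃ A : Matrix V V F, IsGraphMatrix F G A ∧ A.rank ≤ k := by
  classical
  constructor
  · intro h
    have hne : {r : ℕ | ∃ A : Matrix V V F, IsGraphMatrix F G A ∧ A.rank = r}.Nonempty :=
      ⟨_, _, isGraphMatrix_adjMatrix F G, rfl⟩
    obtain ⟨A, hA, hrank⟩ := Nat.sInf_mem hne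
    exact ⟨A, hA, hrank.trans_le h⟩
  · rintro ⟨A, hA, hrank⟩
    exact le_trans (Nat.sInf_le ⟨A, hA, rfl⟩) hrank

end GraphMatrix

section Dart

instance : DecidableRel dart.Adj := by unfold dart; infer_instance

lemma IsGraphMatrix.diag_of_dart_of_rank_le {M : Matrix (Fin 5) (Fin 5) (ZMod 2)}
    (hM : IsGraphMatrix (ZMod 2) dart M) (hrank : M.rank ≤ 3) : M 0 0 = 1 ∧ M 2 2 = 0 := by
  have hminor (r c : Fin 4 → Fin 5) : (M.submatrix r c).det = 0 :=
    det_submatrix_eq_zero_of_rank_lt (hrank.trans_lt (by simp)) r c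
  rw [hM.eq_adjMatrix_add_diagonal] at hminor
  have hdet₀ : ∀ d : Fin 5 → ZMod 2, ((dart.adjMatrix (ZMod 2) + diagonal d).submatrix
      ![0, 1, 2, 3] ![0, 1, 3, 4]).det = d 0 * (d 1 + d 3) + 1 := by
    decide +kernel
  have hdet₂ : ∀ d : Fin 5 → ZMod 2, ((dart.adjMatrix (ZMod 2) + diagonal d).submatrix
      ![0, 2, 3, 4] ![0, 1, 2, 4]).det = d 0 * (d 2 + d 4 + d 2 * d 4) := by
    decide +kernel
  have h₀ : M 0 0 * (M 1 1 + M 3 3) + 1 = 0 := (hdet₀ M.diag).symm.trans (hminor _ _)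
  have h₂ : M 0 0 * (M 2 2 + M 4 4 + M 2 2 * M 4 4) = 0 :=
    (hdet₂ M.diag).symm.trans (hminor _ _)
  have hsolve : ∀ d₀ d₂ d₄ e : ZMod 2,
      d₀ * e + 1 = 0 → d₀ * (d₂ + d₄ + d₂ * d₄) = 0 → d₀ = 1 ∧ d₂ = 0 := by
    decide
  exact hsolve _ _ _ _ h₀ h₂

variable {V : Type*} [DecidableEq V] {G : SimpleGraph V} [DecidableRel G.Adj]

/-- For a dart `f` in `G`, the graph matrix of `G` over `F₂` whose diagonal is `1` at `f 0`, `b` at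
`f 3` and `0` elsewhere. Its columns at `f 0`, `f 2`, `f 3` are those of every graph matrix of rank
at most three with entry `b` at `(f 3, f 3)`. -/
def dartMatrix (f : dart ↪g G) (b : ZMod 2) : Matrix V V (ZMod 2) :=
  G.adjMatrix (ZMod 2) + diagonal (Pi.single (f 0) 1 + Pi.single (f 3) b)

/-- The vertices `f 0`, `f 2`, `f 3` of a dart `f` in `G`, where the principal submatrix of
`dartMatrix f b` is invertible. -/
def dartFrame (f : dart ↪g G) : Fin 3 → V :=
  f ∘ ![0, 2, 3]

/-- The parameter `b` fits the pair `x, y` if the `(x, y)` entry reconstructed from the rows and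
columns of `dartMatrix f b` at `dartFrame f` is the adjacency of `x` and `y`. -/
def DartFits (f : dart ↪g G) (b : ZMod 2) (x y : V) : Prop :=
  skeleton (dartMatrix f b) (dartFrame f) (dartFrame f) x y = G.adjMatrix (ZMod 2) x y

lemma isSymm_dartMatrix (f : dart ↪g G) (b : ZMod 2) : (dartMatrix f b).IsSymm :=
  (SimpleGraph.isSymm_adjMatrix G).add (isSymm_diagonal _)

lemma dartMatrix_comp {W : Type*} [DecidableEq W] {H : SimpleGraph W} [DecidableRel H.Adj]
    (φ : H ↪g G) (f : dart ↪g H) (b : ZMod 2) :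
    (dartMatrix (φ.comp f) b).submatrix φ φ = dartMatrix f b := by
  ext x y
  simp [dartMatrix, diagonal_apply, Pi.single_apply, SimpleGraph.adjMatrix_apply]

lemma dartMatrix_submatrix_dartFrame (f : dart ↪g G) (b : ZMod 2) :
    (dartMatrix f b).submatrix (dartFrame f) (dartFrame f) = !![1, 0, 0; 0, 0, 1; 0, 1, b] :=
  calc
    _ = ((dartMatrix f b).submatrix f f).submatrix ![0, 2, 3] ![0, 2, 3] := rfl
    _ = (dartMatrix SimpleGraph.Embedding.refl b).submatrix ![0, 2, 3] ![0, 2, 3] :=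
      congrArg (submatrix · _ _) (dartMatrix_comp f SimpleGraph.Embedding.refl b)
    _ = _ := by decide +revert

lemma dartFits_comp_iff {W : Type*} [DecidableEq W] {H : SimpleGraph W} [DecidableRel H.Adj]
    (φ : H ↪g G) (f : dart ↪g H) (b : ZMod 2) (x y : W) :
    DartFits (φ.comp f) b (φ x) (φ y) ↔ DartFits f b x y := by
  simp only [DartFits, ← dartMatrix_comp φ f, skeleton_submatrix, submatrix_apply,
    SimpleGraph.adjMatrix_apply, φ.map_adj_iff]
  rfl

lemma skeleton_dartMatrix_apply (f : dart ↪g G) (b : ZMod 2) (x y : V) :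
    skeleton (dartMatrix f b) (dartFrame f) (dartFrame f) x y =
      dartMatrix f b x (f 0) * dartMatrix f b y (f 0) +
      b * dartMatrix f b x (f 2) * dartMatrix f b y (f 2) +
      dartMatrix f b x (f 2) * dartMatrix f b y (f 3) +
      dartMatrix f b x (f 3) * dartMatrix f b y (f 2) := by
  have hinv : (!![1, 0, 0; 0, 0, 1; 0, 1, b])⁻¹ = !![1, 0, 0; 0, b, 1; 0, 1, 0] := by
    refine inv_eq_right_inv ?_
    decide +revert
  simp only [skeleton, dartMatrix_submatrix_dartFrame, hinv, Matrix.mul_apply, Fin.sum_univ_three]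
  simp only [dartFrame, submatrix_apply, id_eq, Function.comp_apply, of_apply, cons_val',
    cons_val_fin_one, cons_val_zero, cons_val_one, cons_val, (isSymm_dartMatrix f b).apply y]
  ring

lemma IsGraphMatrix.apply_eq_dartMatrix [Fintype V] {A : Matrix V V (ZMod 2)}
    (hA : IsGraphMatrix (ZMod 2) G A) (hrank : A.rank ≤ 3) (f : dart ↪g G) (x : V) (i : Fin 3) :
    A x (dartFrame f i) = dartMatrix f (A (f 3) (f 3)) x (dartFrame f i) := by
  obtain ⟨h₀, h₂⟩ : A (f 0) (f 0) = 1 ∧ A (f 2) (f 2) = 0 :=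
    (hA.submatrix f).diag_of_dart_of_rank_le ((A.rank_submatrix_le f f).trans hrank)
  by_cases hx : x = dartFrame f i
  · subst hx
    fin_cases i <;> simp [dartFrame, dartMatrix, f.injective.eq_iff, h₀, h₂]
  · simp [(isGraphMatrix_zmod_two_iff.1 hA).2 x _ hx, dartMatrix, diagonal_apply_ne _ hx]

lemma IsGraphMatrix.pairwise_dartFits [Fintype V] {A : Matrix V V (ZMod 2)}
    (hA : IsGraphMatrix (ZMod 2) G A) (hrank : A.rank ≤ 3) (f : dart ↪g G) :
    Pairwise (DartFits f (A (f 3) (f 3))) := by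
  intro x y hxy
  set s := dartFrame f
  set M := dartMatrix f (A (f 3) (f 3))
  have hM : M.IsSymm := isSymm_dartMatrix f _
  have hcol : A.submatrix id s = M.submatrix id s := ext (hA.apply_eq_dartMatrix hrank f)
  have hrow : A.submatrix s id = M.submatrix s id := by
    simpa only [transpose_submatrix, hA.1.eq, hM.eq] using congrArg transpose hcol
  have hblock : A.submatrix s s = M.submatrix s s := congrArg (Matrix.submatrix · s id) hcol
  have hdet : IsUnit (A.submatrix s s).det := by
    rw [hblock, dartMatrix_submatrix_dartFrame]
    simp [det_fin_three]
  calc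
    skeleton M s s x y = skeleton A s s x y := by simp only [skeleton, hcol, hrow, hblock]
    _ = A x y := by rw [skeleton_eq_self_of_rank_le (by simpa using hrank) hdet]
    _ = G.adjMatrix (ZMod 2) x y := (isGraphMatrix_zmod_two_iff.1 hA).2 x y hxy

lemma minRank_le_three_iff_dartFits [Fintype V] (f : dart ↪g G) :
    minRank (ZMod 2) G ≤ 3 ↔ ∃ b, Pairwise (DartFits f b) := by
  rw [minRank_le_iff]
  constructor
  · rintro ⟨A, hA, hrank⟩
    exact ⟨_, hA.pairwise_dartFits hrank f⟩
  · rintro ⟨b, hb⟩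
    exact ⟨_, isGraphMatrix_zmod_two_iff.2 ⟨isSymm_skeleton (isSymm_dartMatrix f b) _, hb⟩,
      rank_skeleton_le _ _ _⟩

lemma exists_pairwise_dartFits_of_minRank_deleteVert_le [Fintype V] (f : dart ↪g G) {v : V}
    (hv : v ∉ Set.range f) (h : minRank (ZMod 2) (deleteVert G v) ≤ 3) :
    ∃ b, ({v}ᶜ : Set V).Pairwise (DartFits f b) := by
  classical
  let φ : deleteVert G v ↪g G := SimpleGraph.Embedding.comap (.subtype _) G
  let f' : dart ↪g deleteVert G v :=
    { toFun i := ⟨f i, fun hi => hv ⟨i, hi⟩⟩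
      inj' _ _ hij := f.injective (congrArg Subtype.val hij)
      map_rel_iff' := f.map_adj_iff }
  obtain ⟨b, hb⟩ := (minRank_le_three_iff_dartFits f').1 h
  exact ⟨b, fun x hx y hy hxy =>
    (dartFits_comp_iff φ f' b ⟨x, hx⟩ ⟨y, hy⟩).2 (hb (Subtype.coe_ne_coe.1 hxy))⟩

lemma skeleton_dartMatrix_sub (f : dart ↪g G) (b c : ZMod 2) {x y : V} (hx : x ≠ f 3)
    (hy : y ≠ f 3) :
    skeleton (dartMatrix f b) (dartFrame f) (dartFrame f) x y -
      skeleton (dartMatrix f c) (dartFrame f) (dartFrame f) x y =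
      (b - c) * G.adjMatrix (ZMod 2) x (f 2) * G.adjMatrix (ZMod 2) y (f 2) := by
  have hrow {z : V} (hz : z ≠ f 3) (w : V) : dartMatrix f b z w = dartMatrix f c z w := by
    simp [dartMatrix, diagonal_apply, hz]
  have htwo (z : V) : dartMatrix f c z (f 2) = G.adjMatrix (ZMod 2) z (f 2) := by
    by_cases hz : z = f 2 <;> simp [dartMatrix, hz, f.injective.eq_iff]
  simp only [skeleton_dartMatrix_apply, hrow hx, hrow hy, htwo]
  ring

lemma not_adj_of_dartFits_of_dartFits (f : dart ↪g G) {b c : ZMod 2} (hbc : b ≠ c) {x : V}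
    (hx : x ≠ f 3) (hb : DartFits f b x (f 1)) (hc : DartFits f c x (f 1)) : ¬ G.Adj x (f 2) := by
  have hadj : G.Adj (f 1) (f 2) := f.map_adj_iff.2 (by decide)
  have hsub := skeleton_dartMatrix_sub f b c hx (f.injective.ne (by decide : (1 : Fin 5) ≠ 3))
  rw [hb, hc] at hsub
  simpa [hadj, (sub_ne_zero.2 hbc).symm] using hsub

lemma dartFits_iff_of_not_adj (f : dart ↪g G) (b c : ZMod 2) {x y : V} (hx : x ≠ f 3)
    (hy : y ≠ f 3) (hadj : ¬ G.Adj x (f 2)) : DartFits f b x y ↔ DartFits f c x y := by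
  have hsub := skeleton_dartMatrix_sub f b c hx hy
  simp only [SimpleGraph.adjMatrix_apply, hadj, if_false, mul_zero, zero_mul, sub_eq_zero] at hsub
  rw [DartFits, DartFits, hsub]

lemma exists_forall_pairwise_insert_dartFits (f : dart ↪g G)
    (h : ∀ u w, ∃ b, (insert u (insert w (Set.range f))).Pairwise (DartFits f b)) :
    ∃ b, ∀ u, (insert u (Set.range f)).Pairwise (DartFits f b) := by
  by_contra! hcon
  choose u hu using hcon
  obtain ⟨b, hb⟩ := h (u 0) (u 1)
  refine hu b (hb.mono (Set.insert_subset ?_ ?_))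
  · fin_cases b
    exacts [.inl rfl, .inr (.inl rfl)]
  · exact (Set.subset_insert _ _).trans (Set.subset_insert _ _)

lemma exists_pairwise_dartFits (f : dart ↪g G)
    (h : ∀ u w, ∃ b, (insert u (insert w (Set.range f))).Pairwise (DartFits f b)) :
    ∃ b, Pairwise (DartFits f b) := by
  obtain ⟨b, hb⟩ := exists_forall_pairwise_insert_dartFits f h
  refine ⟨b, fun x y hxy => ?_⟩
  by_cases hx : x ∈ Set.range f
  · exact hb y (.inr hx) (.inl rfl) hxy
  by_cases hy : y ∈ Set.range f
  · exact hb x (.inl rfl) (.inr hy) hxy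
  obtain ⟨c, hc⟩ := h x y
  have hcxy : DartFits f c x y := hc (.inl rfl) (.inr (.inl rfl)) hxy
  rcases eq_or_ne b c with rfl | hbc
  · exact hcxy
  have hne {z : V} (hz : z ∉ Set.range f) (i : Fin 5) : z ≠ f i := fun hi => hz ⟨i, hi.symm⟩
  have hadj : ¬ G.Adj x (f 2) := not_adj_of_dartFits_of_dartFits f hbc (hne hx 3)
    (hb x (.inl rfl) (.inr ⟨1, rfl⟩) (hne hx 1))
    (hc (.inl rfl) (.inr (.inr ⟨1, rfl⟩)) (hne hx 1))
  exact (dartFits_iff_of_not_adj f b c (hne hx 3) (hne hy 3) hadj).2 hcxy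

end Dart

lemma exists_notMem_insert_insert_range {α β : Type*} [Fintype α] [Fintype β]
    (h : Fintype.card α + 2 < Fintype.card β) (f : α → β) (u w : β) :
    ∃ v, v ∉ insert u (insert w (Set.range f)) := by
  classical
  have hcard : (insert u (insert w (Finset.univ.image f))).card < Fintype.card β := by
    have hu := Finset.card_insert_le u (insert w (Finset.univ.image f))
    have hw := Finset.card_insert_le w (Finset.univ.image f)
    have himage : (Finset.univ.image f).card ≤ Fintype.card α := Finset.card_image_le
    omega
  obtain ⟨v, -, hv⟩ := Finset.exists_mem_notMem_of_card_lt_card hcard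
  exact ⟨v, by simpa using hv⟩

/-- If `G ∈ F₄(F₂, dart)`, then `G` has at most 7 vertices. -/
theorem card_le_seven_of_forbRel_dart {V : Type*} [Fintype V] [DecidableEq V]
    (G : SimpleGraph V) (h : MemForbRel (ZMod 2) 4 dart G) :
    Fintype.card V ≤ 7 := by
  classical
  obtain ⟨hG, f, hf⟩ := h
  by_contra! hcard
  have hle : minRank (ZMod 2) G ≤ 3 := by
    refine (minRank_le_three_iff_dartFits f).2 (exists_pairwise_dartFits f fun u w => ?_)
    obtain ⟨v, hv⟩ := exists_notMem_insert_insert_range (by simpa using hcard) f u w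
    have hvf : v ∉ Set.range f := fun h => hv (.inr (.inr h))
    obtain ⟨b, hb⟩ := exists_pairwise_dartFits_of_minRank_deleteVert_le f hvf
      (Nat.le_of_succ_le_succ (hf v hvf))
    exact ⟨b, hb.mono (Set.subset_compl_singleton_iff.2 hv)⟩
  omega
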